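/- Let (γ₁,γ₂) be an admissible pair of regular curves in S² admitting lifts, and suppose there exists θ with 0 < θ < π such that κ₁(s₁) > cot θ > κ₂(s₂) for all s₁, s₂ ∈ ℝ. Define γ̄₁(s) := γ₁^θ(s) and γ̄₂(s) := γ₂^θ(−s). Then: (1) (γ̄₁,γ̄₂) is an admissible pair whose geodesic curvatures satisfy κ̄₁(s₁) > cot θ > κ̄₂(s₂) for all s₁, s₂; (2) there exists a ∈ SU(2) such that f_{γ̄₁,γ̄₂}(s₁,s₂) = a f_{γ₁,γ₂}(s₁,−s₂) a⁻¹ for all (s₁,s₂); (3) the mean curvature functions H(s₁,s₂) := (1+κ₁(s₁)κ₂(s₂))/(κ₁(s₁)−κ₂(s₂)) and H̄(s₁,s₂) := (1+κ̄₁(s₁)κ̄₂(s₂))/(κ̄₁(s₁)−κ̄₂(s₂)) satisfy H̄(s₁,s₂) = −H(s₁,−s₂). -/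

import Mathlib

noncomputable section

open Matrix

/-- Euclidean 3-space (as triples of reals). -/
abbrev R3 : Type := Fin 3 → ℝ

/-- The Euclidean inner product on ℝ³. -/
def dot3 (a b : R3) : ℝ := a 0 * b 0 + a 1 * b 1 + a 2 * b 2

/-- The Euclidean norm on ℝ³. -/
def norm3 (a : R3) : ℝ := Real.sqrt (dot3 a a)

/-- The cross product on ℝ³. -/
def cross3 (a b : R3) : R3 :=
  ![a 1 * b 2 - a 2 * b 1, a 2 * b 0 - a 0 * b 2, a 0 * b 1 - a 1 * b 0]

/-- The determinant of three vectors in ℝ³. -/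
def det3 (a b c : R3) : ℝ := dot3 a (cross3 b c)

/-- `γ : ℝ → ℝ³` is a regular curve in the unit sphere S²:
it is smooth, takes values in S², and has nowhere-vanishing derivative. -/
structure IsRegularCurve (γ : ℝ → R3) : Prop where
  smooth : ContDiff ℝ (⊤ : ℕ∞) γ
  sphere : ∀ s, dot3 (γ s) (γ s) = 1
  reg : ∀ s, deriv γ s ≠ 0

/-- The geodesic curvature `κ(s) = det(γ, γ', γ'')/|γ'|³` of a curve in S². -/
def kappa (γ : ℝ → R3) (s : ℝ) : ℝ :=
  det3 (γ s) (deriv γ s) (deriv (deriv γ) s) / norm3 (deriv γ s) ^ 3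

/-- The unit normal `n(s) = (γ × γ')/|γ'|` of a curve in S². -/
def unitNormal (γ : ℝ → R3) (s : ℝ) : R3 :=
  (norm3 (deriv γ s))⁻¹ • cross3 (γ s) (deriv γ s)

/-- `γ` is closed of period `l > 0`. -/
def HasPeriod (γ : ℝ → R3) (l : ℝ) : Prop := 0 < l ∧ ∀ s, γ (s + l) = γ s

/-- 2×2 complex matrices. -/
abbrev Mat2 := Matrix (Fin 2) (Fin 2) ℂ

def E1 : Mat2 := !![0, Complex.I; Complex.I, 0]
def E2 : Mat2 := !![0, -1; 1, 0]
def E3 : Mat2 := !![Complex.I, 0; 0, -Complex.I]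

/-- The identification of ℝ³ with su(2) via the orthonormal basis e₁, e₂, e₃. -/
def toSu2 (v : R3) : Mat2 := (v 0 : ℂ) • E1 + (v 1 : ℂ) • E2 + (v 2 : ℂ) • E3

/-- The adjoint action `Ad(a)x = a x a⁻¹`. -/
def AdM (a x : Mat2) : Mat2 := a * x * a⁻¹

/-- `c : ℝ → SU(2)` is a lift of the regular curve `γ` in S²:
it is smooth (entrywise), takes values in SU(2), and satisfies
`Ad(c(s))e₃ = γ(s)` and `Ad(c(s))e₁ = γ'(s)/|γ'(s)|` under `toSu2`. -/
structure IsLift (γ : ℝ → R3) (c : ℝ → Mat2) : Prop where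
  mem : ∀ s, c s ∈ Matrix.specialUnitaryGroup (Fin 2) ℂ
  smooth : ∀ i j, ContDiff ℝ (⊤ : ℕ∞) fun s => c s i j
  ad3 : ∀ s, AdM (c s) E3 = toSu2 (γ s)
  ad1 : ∀ s, AdM (c s) E1 = toSu2 ((norm3 (deriv γ s))⁻¹ • deriv γ s)

/-- The entrywise derivative of a matrix-valued curve. -/
def matDeriv (c : ℝ → Mat2) (s : ℝ) : Mat2 :=
  Matrix.of fun i j => deriv (fun t => c t i j) s

/-- The map `f_{γ₁,γ₂}(s₁,s₂) = c₁(0)⁻¹ c₁(s₁) c₂(s₂)⁻¹ c₂(0)` associated to lifts `c₁, c₂`. -/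
def fmap (c1 c2 : ℝ → Mat2) (s1 s2 : ℝ) : Mat2 :=
  (c1 0)⁻¹ * c1 s1 * (c2 s2)⁻¹ * c2 0

/-- `(γ₁, γ₂)` is an admissible pair. -/
structure IsAdmissiblePair (γ1 γ2 : ℝ → R3) : Prop where
  reg1 : IsRegularCurve γ1
  reg2 : IsRegularCurve γ2
  param1 : ∀ s, norm3 (deriv γ1 s) ^ 2 * (1 + kappa γ1 s ^ 2) = 4
  param2 : ∀ s, norm3 (deriv γ2 s) ^ 2 * (1 + kappa γ2 s ^ 2) = 4
  curv : ∀ s1 s2, kappa γ2 s2 < kappa γ1 s1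

/-- The restriction of `γ` to `[a,b]` is a shell. -/
def IsShell (γ : ℝ → R3) (a b : ℝ) : Prop :=
  a < b ∧ Set.InjOn γ (Set.Ico a b) ∧ γ a = γ b ∧
    LinearIndependent ℝ ![deriv γ a, deriv γ b]

/-- A positive shell: `det(γ(a), γ'(a), γ'(b)) < 0`. -/
def IsPositiveShell (γ : ℝ → R3) (a b : ℝ) : Prop :=
  IsShell γ a b ∧ det3 (γ a) (deriv γ a) (deriv γ b) < 0

/-- A negative shell: `det(γ(a), γ'(a), γ'(b)) > 0`. -/
def IsNegativeShell (γ : ℝ → R3) (a b : ℝ) : Prop :=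
  IsShell γ a b ∧ 0 < det3 (γ a) (deriv γ a) (deriv γ b)

/-- The unit sphere S² in ℝ³. -/
def sphere2 : Set R3 := {x | dot3 x x = 1}

/-- The μ-circle with center `o ∈ S²`. -/
def muCircle (μ : ℝ) (o : R3) : Set R3 :=
  {x | dot3 x x = 1 ∧ dot3 x o = μ / Real.sqrt (1 + μ ^ 2)}

/-- The (open) interior domain of the μ-circle with center `o ∈ S²`. -/
def muDisk (μ : ℝ) (o : R3) : Set R3 :=
  {x | dot3 x x = 1 ∧ μ / Real.sqrt (1 + μ ^ 2) < dot3 x o}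

def normalize3 (v : R3) : R3 := (norm3 v)⁻¹ • v

/-- `Δ` is the interior domain of the shell `γ|_{[a,b]}`: it is a connected component of the
complement of the image of the shell in S², and for each `s ∈ (a,b)` the points obtained by
pushing `γ(s)` slightly in the direction `σ • n(s)` (σ = 1 for a positive shell, σ = -1 for a
negative shell) belong to `Δ`. -/
def IsInteriorDomain (γ : ℝ → R3) (a b σ : ℝ) (Δ : Set R3) : Prop :=
  (∃ p ∈ sphere2 \ γ '' Set.Icc a b,
      Δ = connectedComponentIn (sphere2 \ γ '' Set.Icc a b) p) ∧
    ∀ s ∈ Set.Ioo a b, ∃ ε > 0, ∀ δ ∈ Set.Ioo (0 : ℝ) ε,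
      normalize3 (γ s + (σ * δ) • unitNormal γ s) ∈ Δ

/-- The center `o_t = (μ γ(t) + n(t))/√(1+μ²)` of the tangent μ-circle to `γ` at `γ(t)`
on the normal side. -/
def tangentCenter (μ : ℝ) (γ : ℝ → R3) (t : ℝ) : R3 :=
  (Real.sqrt (1 + μ ^ 2))⁻¹ • (μ • γ t + unitNormal γ t)

/-- The rotation of ℝ³ through angle `θ` about the oriented (unit) axis `o`. -/
def rot3 (o : R3) (θ : ℝ) (x : R3) : R3 :=
  Real.cos θ • x + Real.sin θ • cross3 o x + ((1 - Real.cos θ) * dot3 o x) • o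

/-- A closed regular curve of period `l` is generic: every self-intersection is a
transversal double point. -/
def IsGeneric (γ : ℝ → R3) (l : ℝ) : Prop :=
  ∀ s t : ℝ, γ s = γ t → (¬∃ k : ℤ, s - t = k * l) →
    LinearIndependent ℝ ![deriv γ s, deriv γ t] ∧
      ∀ u : ℝ, γ u = γ s → (∃ k : ℤ, u - s = k * l) ∨ (∃ k : ℤ, u - t = k * l)

/-- The number of crossings (self-intersection points) of a closed curve of period `l`. -/
def crossings (γ : ℝ → R3) (l : ℝ) : ℕ :=
  Set.ncard {p : R3 | ∃ s t : ℝ, γ s = p ∧ γ t = p ∧ ¬∃ k : ℤ, s - t = k * l}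

/-- The spherical (geodesic) distance on S³, identified with SU(2):
`dist(A,B) = arccos(Re trace(A Bᴴ)/2)`, which corresponds to the round distance on the
unit sphere S³ ⊂ ℝ⁴. -/
def distS3 (A B : Mat2) : ℝ := Real.arccos ((Matrix.trace (A * Bᴴ)).re / 2)

/-- The extrinsic diameter of the image of the map `f` associated to the lifts `c₁, c₂`. -/
def extDiam (c1 c2 : ℝ → Mat2) : ℝ :=
  sSup {d : ℝ | ∃ s1 s2 u1 u2 : ℝ, d = distS3 (fmap c1 c2 s1 s2) (fmap c1 c2 u1 u2)}

/-- The parallel curve `γ^θ = (cos θ) γ + (sin θ) n`. -/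
def parallelCurve (γ : ℝ → R3) (θ : ℝ) (s : ℝ) : R3 :=
  Real.cos θ • γ s + Real.sin θ • unitNormal γ s

/-- The arclength-type parameter `s(t) = (1/2)∫₀ᵗ |γ'(u)|√(1+κ(u)²) du`. -/
def arcParam (γ : ℝ → R3) (t : ℝ) : ℝ :=
  (1 / 2) * ∫ u in (0 : ℝ)..t, norm3 (deriv γ u) * Real.sqrt (1 + kappa γ u ^ 2)

/-! A curve of curvature `κ = cot ρ` is osculated by circles of spherical radius `ρ`, and its
parallel curve at distance `θ` by circles of radius `|ρ - θ|`. Since `ρ₁ < θ < ρ₂` along the two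
curves, `γ₁^θ` runs backwards and `γ₂^θ` forwards with respect to the original tangents, hence the
reversal of the second parameter; the new curvatures are then `cot (θ - ρᵢ)`, and
`H = cot (ρ₂ - ρ₁)` changes sign. The adapted frames of both parallel curves arise from the original
ones by right multiplication with one constant half-turn, which conjugates the associated map. -/

/-! ### Calculus of vectors in `ℝ³` -/

lemma dot3_eq_dotProduct (a b : R3) : dot3 a b = a ⬝ᵥ b := (vec3_dotProduct a b).symm

lemma cross3_eq_crossProduct (a b : R3) : cross3 a b = a ⨯₃ b := rfl

lemma norm3_eq_norm (a : R3) : norm3 a = ‖(WithLp.toLp 2 a : EuclideanSpace ℝ (Fin 3))‖ := by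
  simp only [norm3, dot3, EuclideanSpace.norm_eq, Fin.sum_univ_three, Real.norm_eq_abs,
    sq_abs, ← sq]

lemma norm3_pos {a : R3} (ha : a ≠ 0) : 0 < norm3 a := by
  simpa only [norm3_eq_norm, norm_pos_iff, ne_eq, WithLp.toLp_eq_zero] using ha

lemma norm3_smul (r : ℝ) (a : R3) : norm3 (r • a) = |r| * norm3 a := by
  simp only [norm3_eq_norm, WithLp.toLp_smul, norm_smul, Real.norm_eq_abs]

lemma norm3_neg (a : R3) : norm3 (-a) = norm3 a := by
  simp only [norm3_eq_norm, WithLp.toLp_neg, norm_neg]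

lemma norm3_eq_one_iff {a : R3} : norm3 a = 1 ↔ a ⬝ᵥ a = 1 := by
  rw [norm3, Real.sqrt_eq_one, dot3_eq_dotProduct]

section Bilinear

variable {E F G : Type*} [NormedAddCommGroup E] [NormedSpace ℝ E] [FiniteDimensional ℝ E]
  [NormedAddCommGroup F] [NormedSpace ℝ F] [FiniteDimensional ℝ F]
  [NormedAddCommGroup G] [NormedSpace ℝ G]
  {f : ℝ → E} {g : ℝ → F}

lemma hasDerivAt_bilinear (B : E →ₗ[ℝ] F →ₗ[ℝ] G) {f' : E} {g' : F} {s : ℝ}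
    (hf : HasDerivAt f f' s) (hg : HasDerivAt g g' s) :
    HasDerivAt (fun t => B (f t) (g t)) (B (f s) g' + B f' (g s)) s :=
  B.toContinuousBilinearMap.hasDerivAt_of_bilinear (fun _ => hf) (fun _ => hg)

lemma contDiff_bilinear (B : E →ₗ[ℝ] F →ₗ[ℝ] G) {k : WithTop ℕ∞}
    (hf : ContDiff ℝ k f) (hg : ContDiff ℝ k g) : ContDiff ℝ k fun t => B (f t) (g t) :=
  B.toContinuousBilinearMap.isBoundedBilinearMap.contDiff.comp₂ hf hg

end Bilinear

section VectorCalculus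

variable {f g : ℝ → R3}

lemma hasDerivAt_dotProduct {f' g' : R3} {s : ℝ} (hf : HasDerivAt f f' s)
    (hg : HasDerivAt g g' s) :
    HasDerivAt (fun t => f t ⬝ᵥ g t) (f s ⬝ᵥ g' + f' ⬝ᵥ g s) s :=
  hasDerivAt_bilinear (dotProductBilin ℝ ℝ) hf hg

lemma contDiff_dotProduct {k : WithTop ℕ∞} (hf : ContDiff ℝ k f) (hg : ContDiff ℝ k g) :
    ContDiff ℝ k fun t => f t ⬝ᵥ g t :=
  contDiff_bilinear (dotProductBilin ℝ ℝ) hf hg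

lemma dotProduct_add_eq_zero_of_const {f' g' : R3} {s c : ℝ} (hf : HasDerivAt f f' s)
    (hg : HasDerivAt g g' s) (hc : ∀ t, f t ⬝ᵥ g t = c) : f s ⬝ᵥ g' + f' ⬝ᵥ g s = 0 :=
  (hasDerivAt_dotProduct hf hg).unique (by simpa only [hc] using hasDerivAt_const s c)

lemma dotProduct_eq_zero_of_self_const {f' : R3} {s c : ℝ} (hf : HasDerivAt f f' s)
    (hc : ∀ t, f t ⬝ᵥ f t = c) : f s ⬝ᵥ f' = 0 := by
  linarith [dotProduct_add_eq_zero_of_const hf hf hc, dotProduct_comm f' (f s)]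

end VectorCalculus

section OrthonormalPair

variable {a b : R3}

lemma crossProduct_dotProduct_self_eq_one (ha : a ⬝ᵥ a = 1) (hb : b ⬝ᵥ b = 1)
    (hab : a ⬝ᵥ b = 0) : a ⨯₃ b ⬝ᵥ a ⨯₃ b = 1 := by
  rw [cross_dot_cross, ha, hb, hab, dotProduct_comm b a, hab]; norm_num

lemma eq_sum_dotProduct_smul (ha : a ⬝ᵥ a = 1) (hb : b ⬝ᵥ b = 1) (hab : a ⬝ᵥ b = 0) (v : R3) :
    v = (v ⬝ᵥ a) • a + (v ⬝ᵥ b) • b + (v ⬝ᵥ a ⨯₃ b) • (a ⨯₃ b) := by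
  have hvc : v ⨯₃ (a ⨯₃ b) = (v ⬝ᵥ b) • a - (v ⬝ᵥ a) • b := by
    rw [cross_cross_eq_smul_sub_smul', dotProduct_comm a v]
  have hca : a ⨯₃ b ⨯₃ a = b := by
    rw [cross_cross_eq_smul_sub_smul, ha, dotProduct_comm b a, hab]; module
  have hcb : a ⨯₃ b ⨯₃ b = -a := by
    rw [cross_cross_eq_smul_sub_smul, hb, hab]; module
  have hv : a ⨯₃ b ⨯₃ (v ⨯₃ (a ⨯₃ b)) = v - (v ⬝ᵥ a ⨯₃ b) • (a ⨯₃ b) := by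
    rw [cross_cross_eq_smul_sub_smul', crossProduct_dotProduct_self_eq_one ha hb hab, one_smul]
  rw [hvc, map_sub, map_smul, map_smul, hca, hcb] at hv
  rw [eq_sub_iff_add_eq] at hv
  exact hv.symm.trans (by module)

end OrthonormalPair

/-! ### Frenet equations on the sphere -/

/-- The unit tangent vector `γ' / |γ'|` of a curve in `ℝ³`; it is `0` where `γ'` vanishes. -/
def unitTangent (γ : ℝ → R3) (s : ℝ) : R3 := (norm3 (deriv γ s))⁻¹ • deriv γ s

lemma unitNormal_eq_crossProduct (γ : ℝ → R3) (s : ℝ) :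
    unitNormal γ s = γ s ⨯₃ unitTangent γ s :=
  (map_smul (crossProduct (γ s)) _ _).symm

lemma unitTangent_cross_self (γ : ℝ → R3) (s : ℝ) :
    unitTangent γ s ⨯₃ γ s = -unitNormal γ s := by
  rw [← cross_anticomm, unitNormal_eq_crossProduct]

lemma dotProduct_unitNormal (γ : ℝ → R3) (s : ℝ) : γ s ⬝ᵥ unitNormal γ s = 0 := by
  rw [unitNormal_eq_crossProduct, dot_self_cross]

lemma kappa_eq_tripleProduct (γ : ℝ → R3) (s : ℝ) :
    kappa γ s = γ s ⬝ᵥ deriv γ s ⨯₃ deriv (deriv γ) s / norm3 (deriv γ s) ^ 3 := by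
  rw [kappa, det3, dot3_eq_dotProduct, cross3_eq_crossProduct]

lemma unitTangent_of_deriv_eq_smul {γ : ℝ → R3} {T : R3} {w s : ℝ} (hw : 0 < w)
    (hT : T ⬝ᵥ T = 1) (hγ : deriv γ s = w • T) : unitTangent γ s = T := by
  rw [unitTangent, hγ, norm3_smul, norm3_eq_one_iff.2 hT, mul_one, abs_of_pos hw,
    inv_smul_smul₀ hw.ne']

lemma kappa_of_deriv_eq_smul {γ T : ℝ → R3} {w : ℝ → ℝ} {T' : R3} {s : ℝ}
    (hγ : ∀ t, deriv γ t = w t • T t) (hw : DifferentiableAt ℝ w s) (hw0 : w s ≠ 0)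
    (hT : HasDerivAt T T' s) (hTs : T s ⬝ᵥ T s = 1) :
    kappa γ s = (γ s ⬝ᵥ T s ⨯₃ T') / |w s| := by
  have hγ' : deriv (deriv γ) s = w s • T' + deriv w s • T s := by
    rw [funext hγ]
    exact (hw.hasDerivAt.fun_smul hT).deriv
  have triple : γ s ⬝ᵥ deriv γ s ⨯₃ deriv (deriv γ) s = |w s| ^ 2 * (γ s ⬝ᵥ T s ⨯₃ T') := by
    simp only [hγ', hγ, map_add, map_smul, LinearMap.smul_apply, cross_self, smul_zero, add_zero,
      dotProduct_smul, smul_eq_mul, sq_abs]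
    ring
  have hw' : |w s| ≠ 0 := abs_ne_zero.2 hw0
  rw [kappa_eq_tripleProduct, triple, hγ, norm3_smul, norm3_eq_one_iff.2 hTs]
  field_simp

namespace IsRegularCurve

variable {γ : ℝ → R3}

lemma dotProduct_self (h : IsRegularCurve γ) (s : ℝ) : γ s ⬝ᵥ γ s = 1 :=
  (dot3_eq_dotProduct _ _).symm.trans (h.sphere s)

lemma speed_pos (h : IsRegularCurve γ) (s : ℝ) : 0 < norm3 (deriv γ s) := norm3_pos (h.reg s)

lemma deriv_eq_smul_unitTangent (h : IsRegularCurve γ) (s : ℝ) :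
    deriv γ s = norm3 (deriv γ s) • unitTangent γ s :=
  (smul_inv_smul₀ (h.speed_pos s).ne' _).symm

lemma hasDerivAt (h : IsRegularCurve γ) (s : ℝ) :
    HasDerivAt γ (norm3 (deriv γ s) • unitTangent γ s) s := by
  rw [← h.deriv_eq_smul_unitTangent]
  exact (h.smooth.differentiable (by simp) s).hasDerivAt

lemma contDiff_deriv (h : IsRegularCurve γ) : ContDiff ℝ (⊤ : ℕ∞) (deriv γ) :=
  (contDiff_infty_iff_deriv.1 h.smooth).2

lemma contDiff_speed (h : IsRegularCurve γ) :
    ContDiff ℝ (⊤ : ℕ∞) fun s => norm3 (deriv γ s) := by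
  simp only [norm3_eq_norm]
  exact (PiLp.contDiff_toLp.comp h.contDiff_deriv).norm ℝ
    fun s => (WithLp.toLp_eq_zero 2).not.2 (h.reg s)

lemma contDiff_unitTangent (h : IsRegularCurve γ) : ContDiff ℝ (⊤ : ℕ∞) (unitTangent γ) :=
  (h.contDiff_speed.inv fun s => (h.speed_pos s).ne').smul h.contDiff_deriv

lemma contDiff_unitNormal (h : IsRegularCurve γ) : ContDiff ℝ (⊤ : ℕ∞) (unitNormal γ) := by
  rw [funext (unitNormal_eq_crossProduct γ)]
  exact contDiff_bilinear crossProduct h.smooth h.contDiff_unitTangent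

lemma contDiff_kappa (h : IsRegularCurve γ) : ContDiff ℝ (⊤ : ℕ∞) (kappa γ) := by
  have hγ'' := (contDiff_infty_iff_deriv.1 h.contDiff_deriv).2
  rw [funext (kappa_eq_tripleProduct γ)]
  exact (contDiff_dotProduct h.smooth (contDiff_bilinear crossProduct h.contDiff_deriv hγ'')).div
    (h.contDiff_speed.pow 3) fun s => pow_ne_zero 3 (h.speed_pos s).ne'

lemma dotProduct_unitTangent_self (h : IsRegularCurve γ) (s : ℝ) :
    unitTangent γ s ⬝ᵥ unitTangent γ s = 1 := by
  rw [← norm3_eq_one_iff, unitTangent, norm3_smul, abs_of_pos (inv_pos.2 (h.speed_pos s)),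
    inv_mul_cancel₀ (h.speed_pos s).ne']

lemma dotProduct_unitTangent (h : IsRegularCurve γ) (s : ℝ) : γ s ⬝ᵥ unitTangent γ s = 0 := by
  have hγ' := dotProduct_eq_zero_of_self_const (h.hasDerivAt s) h.dotProduct_self
  rw [dotProduct_smul, smul_eq_mul] at hγ'
  exact (mul_eq_zero.1 hγ').resolve_left (h.speed_pos s).ne'

lemma dotProduct_unitNormal_self (h : IsRegularCurve γ) (s : ℝ) :
    unitNormal γ s ⬝ᵥ unitNormal γ s = 1 := by
  rw [unitNormal_eq_crossProduct]
  exact crossProduct_dotProduct_self_eq_one (h.dotProduct_self s) (h.dotProduct_unitTangent_self s)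
    (h.dotProduct_unitTangent s)

lemma hasDerivAt_unitTangent (h : IsRegularCurve γ) (s : ℝ) :
    HasDerivAt (unitTangent γ) (norm3 (deriv γ s) • (kappa γ s • unitNormal γ s - γ s)) s := by
  have hT := (h.contDiff_unitTangent.differentiable (by simp) s).hasDerivAt
  have hTT := h.dotProduct_unitTangent_self s
  have tangential : deriv (unitTangent γ) s ⬝ᵥ unitTangent γ s = 0 := by
    rw [dotProduct_comm]
    exact dotProduct_eq_zero_of_self_const hT h.dotProduct_unitTangent_self
  have radial : deriv (unitTangent γ) s ⬝ᵥ γ s = -norm3 (deriv γ s) := by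
    have hγT := dotProduct_add_eq_zero_of_const (h.hasDerivAt s) hT h.dotProduct_unitTangent
    rw [smul_dotProduct, hTT, smul_eq_mul, mul_one] at hγT
    rw [dotProduct_comm]
    exact eq_neg_of_add_eq_zero_left hγT
  have normal : deriv (unitTangent γ) s ⬝ᵥ γ s ⨯₃ unitTangent γ s =
      norm3 (deriv γ s) * kappa γ s := by
    rw [kappa_of_deriv_eq_smul h.deriv_eq_smul_unitTangent
      (h.contDiff_speed.differentiable (by simp) s) (h.speed_pos s).ne' hT hTT,
      abs_of_pos (h.speed_pos s), mul_div_cancel₀ _ (h.speed_pos s).ne',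
      triple_product_permutation]
  refine hT.congr_deriv ?_
  rw [eq_sum_dotProduct_smul (h.dotProduct_self s) hTT (h.dotProduct_unitTangent s)
    (deriv (unitTangent γ) s), tangential, radial, normal, unitNormal_eq_crossProduct]
  module

lemma cross_unitNormal (h : IsRegularCurve γ) (s : ℝ) :
    γ s ⨯₃ unitNormal γ s = -unitTangent γ s := by
  rw [unitNormal_eq_crossProduct, cross_cross_eq_smul_sub_smul', h.dotProduct_unitTangent,
    h.dotProduct_self]
  module

lemma unitTangent_cross_unitNormal (h : IsRegularCurve γ) (s : ℝ) :
    unitTangent γ s ⨯₃ unitNormal γ s = γ s := by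
  rw [unitNormal_eq_crossProduct, cross_cross_eq_smul_sub_smul', h.dotProduct_unitTangent_self,
    h.dotProduct_unitTangent]
  module

lemma hasDerivAt_unitNormal (h : IsRegularCurve γ) (s : ℝ) :
    HasDerivAt (unitNormal γ) (-(norm3 (deriv γ s) * kappa γ s) • unitTangent γ s) s := by
  rw [funext (unitNormal_eq_crossProduct γ)]
  refine (hasDerivAt_bilinear crossProduct (h.hasDerivAt s)
    (h.hasDerivAt_unitTangent s)).congr_deriv ?_
  simp only [map_smul, map_sub, LinearMap.smul_apply, cross_self, h.cross_unitNormal]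
  module

end IsRegularCurve

/-! ### Reversed and parallel curves -/

lemma norm3_deriv_comp_neg (γ : ℝ → R3) (s : ℝ) :
    norm3 (deriv (fun t => γ (-t)) s) = norm3 (deriv γ (-s)) := by
  rw [deriv_comp_neg, norm3_neg]

lemma unitTangent_comp_neg (γ : ℝ → R3) (s : ℝ) :
    unitTangent (fun t => γ (-t)) s = -unitTangent γ (-s) := by
  rw [unitTangent, norm3_deriv_comp_neg, deriv_comp_neg, smul_neg, unitTangent]

lemma kappa_comp_neg (γ : ℝ → R3) (s : ℝ) : kappa (fun t => γ (-t)) s = -kappa γ (-s) := by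
  have hγ'' : deriv (deriv fun t => γ (-t)) s = deriv (deriv γ) (-s) := by
    rw [funext fun t => deriv_comp_neg γ t, deriv.fun_neg, deriv_comp_neg, neg_neg]
  rw [kappa_eq_tripleProduct, kappa_eq_tripleProduct, norm3_deriv_comp_neg, hγ'', deriv_comp_neg,
    map_neg, LinearMap.neg_apply, dotProduct_neg, neg_div]

lemma IsRegularCurve.comp_neg {γ : ℝ → R3} (h : IsRegularCurve γ) :
    IsRegularCurve fun s => γ (-s) where
  smooth := h.smooth.comp contDiff_neg
  sphere s := h.sphere (-s)
  reg s := by simpa only [deriv_comp_neg, neg_ne_zero] using h.reg (-s)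

section ParallelCurve

variable {γ : ℝ → R3} {θ s : ℝ}

lemma contDiff_parallelCurve (h : IsRegularCurve γ) (θ : ℝ) :
    ContDiff ℝ (⊤ : ℕ∞) (parallelCurve γ θ) :=
  (h.smooth.const_smul (Real.cos θ)).add (h.contDiff_unitNormal.const_smul (Real.sin θ))

lemma dot3_parallelCurve_self (h : IsRegularCurve γ) (θ s : ℝ) :
    dot3 (parallelCurve γ θ s) (parallelCurve γ θ s) = 1 := by
  simp only [dot3_eq_dotProduct, parallelCurve, add_dotProduct, dotProduct_add, smul_dotProduct,
    dotProduct_smul, smul_eq_mul, dotProduct_comm (unitNormal γ s) (γ s), h.dotProduct_self,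
    dotProduct_unitNormal, h.dotProduct_unitNormal_self]
  linear_combination Real.sin_sq_add_cos_sq θ

lemma deriv_parallelCurve (h : IsRegularCurve γ) (θ s : ℝ) :
    deriv (parallelCurve γ θ) s =
      (norm3 (deriv γ s) * (Real.cos θ - kappa γ s * Real.sin θ)) • unitTangent γ s := by
  refine (((h.hasDerivAt s).const_smul (Real.cos θ)).add
    ((h.hasDerivAt_unitNormal s).const_smul (Real.sin θ))).deriv.trans ?_
  module

lemma norm3_deriv_parallelCurve (h : IsRegularCurve γ) (θ s : ℝ) :
    norm3 (deriv (parallelCurve γ θ) s) =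
      norm3 (deriv γ s) * |Real.cos θ - kappa γ s * Real.sin θ| := by
  rw [deriv_parallelCurve h, norm3_smul, norm3_eq_one_iff.2 (h.dotProduct_unitTangent_self s),
    mul_one, abs_mul, abs_of_pos (h.speed_pos s)]

lemma isRegularCurve_parallelCurve (h : IsRegularCurve γ)
    (hκ : ∀ s, kappa γ s * Real.sin θ ≠ Real.cos θ) : IsRegularCurve (parallelCurve γ θ) where
  smooth := contDiff_parallelCurve h θ
  sphere := dot3_parallelCurve_self h θ
  reg s := by
    have hT : unitTangent γ s ≠ 0 := fun h0 => by
      simpa [h0] using h.dotProduct_unitTangent_self s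
    rw [deriv_parallelCurve h]
    exact smul_ne_zero (mul_ne_zero (h.speed_pos s).ne' (sub_ne_zero.2 (hκ s).symm)) hT

lemma unitTangent_parallelCurve_of_pos (h : IsRegularCurve γ)
    (hκ : Real.cos θ < kappa γ s * Real.sin θ) :
    unitTangent (parallelCurve γ θ) s = -unitTangent γ s := by
  refine unitTangent_of_deriv_eq_smul (mul_pos (h.speed_pos s) (sub_pos.2 hκ)) ?_ ?_
  · rw [neg_dotProduct_neg, h.dotProduct_unitTangent_self]
  · rw [deriv_parallelCurve h]
    module

lemma unitTangent_parallelCurve_of_neg (h : IsRegularCurve γ)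
    (hκ : kappa γ s * Real.sin θ < Real.cos θ) :
    unitTangent (parallelCurve γ θ) s = unitTangent γ s :=
  unitTangent_of_deriv_eq_smul (mul_pos (h.speed_pos s) (sub_pos.2 hκ))
    (h.dotProduct_unitTangent_self s) (deriv_parallelCurve h θ s)

lemma kappa_parallelCurve (h : IsRegularCurve γ) (hκ : kappa γ s * Real.sin θ ≠ Real.cos θ) :
    kappa (parallelCurve γ θ) s =
      (kappa γ s * Real.cos θ + Real.sin θ) / |Real.cos θ - kappa γ s * Real.sin θ| := by
  have hv := (h.speed_pos s).ne'
  have hw : DifferentiableAt ℝ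
      (fun t => norm3 (deriv γ t) * (Real.cos θ - kappa γ t * Real.sin θ)) s :=
    (h.contDiff_speed.mul (contDiff_const.sub (h.contDiff_kappa.mul contDiff_const))).differentiable
      (by simp) s
  have triple : parallelCurve γ θ s ⬝ᵥ unitTangent γ s ⨯₃
      (norm3 (deriv γ s) • (kappa γ s • unitNormal γ s - γ s)) =
      norm3 (deriv γ s) * (kappa γ s * Real.cos θ + Real.sin θ) := by
    simp only [parallelCurve, map_smul, map_sub, h.unitTangent_cross_unitNormal,
      unitTangent_cross_self, add_dotProduct, smul_dotProduct, dotProduct_smul, dotProduct_sub,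
      dotProduct_neg, smul_eq_mul, h.dotProduct_self, dotProduct_unitNormal,
      dotProduct_comm (unitNormal γ s) (γ s), h.dotProduct_unitNormal_self]
    ring
  rw [kappa_of_deriv_eq_smul (deriv_parallelCurve h θ) hw
    (mul_ne_zero hv (sub_ne_zero.2 hκ.symm)) (h.hasDerivAt_unitTangent s)
    (h.dotProduct_unitTangent_self s), triple, abs_mul, abs_of_pos (h.speed_pos s),
    mul_div_mul_left _ _ hv]

end ParallelCurve

/-! ### The curvature transformation -/

/-- The curvature `cot (θ - ρ)`, up to orientation, of the parallel curve at distance `θ` of a curve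
of curvature `κ = cot ρ`. The denominator vanishes, giving the junk value `0`, exactly where the
parallel curve is singular. -/
def parallelCurvature (θ κ : ℝ) : ℝ :=
  (κ * Real.cos θ + Real.sin θ) / (κ * Real.sin θ - Real.cos θ)

/-- The mean curvature of the flat surface `f_{γ₁,γ₂}` in `S³` at a point where the generating
curves have geodesic curvatures `κ₁` and `κ₂`; it is `cot (ρ₂ - ρ₁)` when `κᵢ = cot ρᵢ`. -/
def meanCurvature (κ₁ κ₂ : ℝ) : ℝ := (1 + κ₁ * κ₂) / (κ₁ - κ₂)

section ParallelCurvature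

variable {θ κ κ₁ κ₂ : ℝ}

lemma one_add_parallelCurvature_mul (h₁ : κ₁ * Real.sin θ - Real.cos θ ≠ 0)
    (h₂ : κ₂ * Real.sin θ - Real.cos θ ≠ 0) :
    1 + parallelCurvature θ κ₁ * parallelCurvature θ κ₂ =
      (1 + κ₁ * κ₂) / ((κ₁ * Real.sin θ - Real.cos θ) * (κ₂ * Real.sin θ - Real.cos θ)) := by
  rw [parallelCurvature, parallelCurvature, div_mul_div_comm, one_add_div (mul_ne_zero h₁ h₂)]
  congr 1
  linear_combination (1 + κ₁ * κ₂) * Real.sin_sq_add_cos_sq θ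

lemma parallelCurvature_sub (h₁ : κ₁ * Real.sin θ - Real.cos θ ≠ 0)
    (h₂ : κ₂ * Real.sin θ - Real.cos θ ≠ 0) :
    parallelCurvature θ κ₁ - parallelCurvature θ κ₂ =
      -(κ₁ - κ₂) / ((κ₁ * Real.sin θ - Real.cos θ) * (κ₂ * Real.sin θ - Real.cos θ)) := by
  rw [parallelCurvature, parallelCurvature, div_sub_div _ _ h₁ h₂]
  congr 1
  linear_combination (κ₂ - κ₁) * Real.sin_sq_add_cos_sq θ

lemma meanCurvature_parallelCurvature (h₁ : κ₁ * Real.sin θ - Real.cos θ ≠ 0)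
    (h₂ : κ₂ * Real.sin θ - Real.cos θ ≠ 0) :
    meanCurvature (parallelCurvature θ κ₁) (parallelCurvature θ κ₂) = -meanCurvature κ₁ κ₂ := by
  rw [meanCurvature, one_add_parallelCurvature_mul h₁ h₂, parallelCurvature_sub h₁ h₂,
    div_div_div_cancel_right₀ (mul_ne_zero h₁ h₂), div_neg, meanCurvature]

lemma parallelCurvature_sub_cot (hθ : Real.sin θ ≠ 0) (h : κ * Real.sin θ - Real.cos θ ≠ 0) :
    parallelCurvature θ κ - Real.cot θ = 1 / ((κ * Real.sin θ - Real.cos θ) * Real.sin θ) := by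
  rw [parallelCurvature, Real.cot_eq_cos_div_sin, div_sub_div _ _ h hθ]
  congr 1
  linear_combination Real.sin_sq_add_cos_sq θ

lemma cot_lt_iff_cos_lt (hθ : 0 < Real.sin θ) : Real.cot θ < κ ↔ Real.cos θ < κ * Real.sin θ := by
  rw [Real.cot_eq_cos_div_sin, div_lt_iff₀ hθ]

lemma lt_cot_iff_lt_cos (hθ : 0 < Real.sin θ) : κ < Real.cot θ ↔ κ * Real.sin θ < Real.cos θ := by
  rw [Real.cot_eq_cos_div_sin, lt_div_iff₀ hθ]

lemma cot_lt_parallelCurvature (hθ : 0 < Real.sin θ) (h : Real.cot θ < κ) :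
    Real.cot θ < parallelCurvature θ κ := by
  have hpos := sub_pos.2 ((cot_lt_iff_cos_lt hθ).1 h)
  rw [← sub_pos, parallelCurvature_sub_cot hθ.ne' hpos.ne']
  exact one_div_pos.2 (mul_pos hpos hθ)

lemma parallelCurvature_lt_cot (hθ : 0 < Real.sin θ) (h : κ < Real.cot θ) :
    parallelCurvature θ κ < Real.cot θ := by
  have hneg := sub_neg.2 ((lt_cot_iff_lt_cos hθ).1 h)
  rw [← sub_neg, parallelCurvature_sub_cot hθ.ne' hneg.ne]
  exact one_div_neg.2 (mul_neg_of_neg_of_pos hneg hθ)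

end ParallelCurvature

namespace IsRegularCurve

variable {γ : ℝ → R3} {θ s : ℝ}

lemma kappa_parallelCurve_of_pos (h : IsRegularCurve γ)
    (hκ : Real.cos θ < kappa γ s * Real.sin θ) :
    kappa (parallelCurve γ θ) s = parallelCurvature θ (kappa γ s) := by
  rw [kappa_parallelCurve h hκ.ne', abs_of_neg (sub_neg.2 hκ), neg_sub, parallelCurvature]

lemma kappa_parallelCurve_comp_neg (h : IsRegularCurve γ)
    (hκ : kappa γ (-s) * Real.sin θ < Real.cos θ) :
    kappa (fun t => parallelCurve γ θ (-t)) s = parallelCurvature θ (kappa γ (-s)) := by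
  rw [kappa_comp_neg, kappa_parallelCurve h hκ.ne, abs_of_pos (sub_pos.2 hκ), ← div_neg, neg_sub,
    parallelCurvature]

lemma speed_sq_mul_parallelCurve (h : IsRegularCurve γ)
    (hκ : kappa γ s * Real.sin θ ≠ Real.cos θ) :
    norm3 (deriv (parallelCurve γ θ) s) ^ 2 * (1 + kappa (parallelCurve γ θ) s ^ 2) =
      norm3 (deriv γ s) ^ 2 * (1 + kappa γ s ^ 2) := by
  have hD := sub_ne_zero.2 hκ
  have hκ2 : kappa (parallelCurve γ θ) s ^ 2 = parallelCurvature θ (kappa γ s) ^ 2 := by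
    rw [kappa_parallelCurve h hκ, parallelCurvature, div_pow, div_pow, sq_abs,
      ← neg_sub (Real.cos θ), neg_sq]
  rw [norm3_deriv_parallelCurve h, hκ2, sq (parallelCurvature _ _),
    one_add_parallelCurvature_mul hD hD, mul_pow, sq_abs]
  field_simp
  ring

end IsRegularCurve

/-! ### Half-turns in `SU(2)` -/

lemma toSu2_add (v w : R3) : toSu2 (v + w) = toSu2 v + toSu2 w := by
  simp only [toSu2, Pi.add_apply, Complex.ofReal_add]
  module

lemma toSu2_smul (r : ℝ) (v : R3) : toSu2 (r • v) = (r : ℂ) • toSu2 v := by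
  simp only [toSu2, Pi.smul_apply, smul_eq_mul, Complex.ofReal_mul]
  module

lemma toSu2_eq_matrix (v : R3) :
    toSu2 v = !![v 2 * Complex.I, -v 1 + v 0 * Complex.I; v 1 + v 0 * Complex.I,
      -(v 2 * Complex.I)] := by
  ext i j
  fin_cases i <;> fin_cases j <;> simp [toSu2, E1, E2, E3, add_comm]

lemma toSu2_single_zero : toSu2 (Pi.single 0 1) = E1 := by simp [toSu2]

lemma toSu2_single_two : toSu2 (Pi.single 2 1) = E3 := by simp [toSu2]

lemma toSu2_mul_toSu2 (v w : R3) :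
    toSu2 v * toSu2 w = toSu2 (v ⨯₃ w) - ((v ⬝ᵥ w : ℝ) : ℂ) • 1 := by
  simp only [toSu2_eq_matrix, cross_apply, vec3_dotProduct]
  ext i j
  fin_cases i <;> fin_cases j <;>
    simp [Matrix.mul_apply, Fin.sum_univ_two] <;> grind [Complex.I_sq]

lemma det_toSu2 (v : R3) : (toSu2 v).det = (v ⬝ᵥ v : ℝ) := by
  rw [toSu2_eq_matrix, Matrix.det_fin_two_of, vec3_dotProduct]
  push_cast
  linear_combination (-(v 2 : ℂ) ^ 2 - (v 0 : ℂ) ^ 2) * Complex.I_sq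

lemma star_toSu2 (v : R3) : star (toSu2 v) = -toSu2 v := by
  ext i j
  fin_cases i <;> fin_cases j <;> simp [toSu2_eq_matrix, Matrix.star_apply, add_comm]

section HalfTurn

variable {u : R3}

lemma toSu2_mul_neg_self (hu : u ⬝ᵥ u = 1) : toSu2 u * -toSu2 u = 1 := by
  rw [mul_neg, toSu2_mul_toSu2, cross_self, hu]
  simp [toSu2]

lemma inv_toSu2 (hu : u ⬝ᵥ u = 1) : (toSu2 u)⁻¹ = -toSu2 u :=
  Matrix.inv_eq_right_inv (toSu2_mul_neg_self hu)

lemma toSu2_mem_specialUnitaryGroup (hu : u ⬝ᵥ u = 1) :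
    toSu2 u ∈ Matrix.specialUnitaryGroup (Fin 2) ℂ := by
  refine mem_specialUnitaryGroup_iff.2 ⟨mem_unitaryGroup_iff.2 ?_, ?_⟩
  · rw [star_toSu2, toSu2_mul_neg_self hu]
  · rw [det_toSu2, hu, Complex.ofReal_one]

lemma AdM_toSu2 (hu : u ⬝ᵥ u = 1) (v : R3) :
    AdM (toSu2 u) (toSu2 v) = toSu2 ((2 * (u ⬝ᵥ v)) • u - v) := by
  have hw : u ⨯₃ v ⨯₃ u = v - (u ⬝ᵥ v) • u := by
    rw [cross_cross_eq_smul_sub_smul, hu, dotProduct_comm v u, one_smul]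
  have hvw : u ⨯₃ v ⬝ᵥ u = 0 := by rw [dotProduct_comm, dot_self_cross]
  rw [AdM, inv_toSu2 hu, mul_neg, toSu2_mul_toSu2, sub_mul, toSu2_mul_toSu2, hw, hvw,
    sub_eq_add_neg _ v, ← neg_one_smul ℝ v, sub_eq_add_neg v, ← neg_smul]
  simp only [toSu2_add, toSu2_smul, smul_mul_assoc, one_mul]
  push_cast
  module

end HalfTurn

lemma AdM_mul (a b x : Mat2) : AdM (a * b) x = AdM a (AdM b x) := by
  simp only [AdM, Matrix.mul_inv_rev, Matrix.mul_assoc]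

lemma AdM_add (a x y : Mat2) : AdM a (x + y) = AdM a x + AdM a y := by
  simp only [AdM, mul_add, add_mul]

lemma AdM_smul (a : Mat2) (z : ℂ) (x : Mat2) : AdM a (z • x) = z • AdM a x := by
  simp only [AdM, mul_smul_comm, smul_mul_assoc]

lemma AdM_mul_right {a : Mat2} (ha : IsUnit a.det) (x y : Mat2) :
    AdM a (x * y) = AdM a x * AdM a y := by
  simp only [AdM, Matrix.mul_assoc, Matrix.nonsing_inv_mul_cancel_left _ _ ha]

/-! ### Lifts of parallel curves -/

namespace IsLift

variable {γ : ℝ → R3} {c : ℝ → Mat2}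

lemma isUnit_det (hc : IsLift γ c) (s : ℝ) : IsUnit (c s).det := by
  rw [(mem_specialUnitaryGroup_iff.1 (hc.mem s)).2]
  exact isUnit_one

lemma ad2 (hc : IsLift γ c) (h : IsRegularCurve γ) (s : ℝ) :
    AdM (c s) E2 = toSu2 (unitNormal γ s) := by
  have hE : E2 = E3 * E1 := by simp [E1, E2, E3]
  rw [hE, AdM_mul_right (hc.isUnit_det s), hc.ad3, hc.ad1, ← unitTangent, toSu2_mul_toSu2,
    h.dotProduct_unitTangent, ← unitNormal_eq_crossProduct, Complex.ofReal_zero, zero_smul,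
    sub_zero]

lemma AdM_toSu2 (hc : IsLift γ c) (h : IsRegularCurve γ) (s : ℝ) (v : R3) :
    AdM (c s) (toSu2 v) = toSu2 (v 0 • unitTangent γ s + v 1 • unitNormal γ s + v 2 • γ s) := by
  simp only [toSu2_add, toSu2_smul, ← hc.ad2 h, ← hc.ad3, unitTangent, ← hc.ad1]
  simp only [toSu2, AdM_add, AdM_smul]

end IsLift

/-- The unit vector bisecting `e₃` and `cos θ e₃ + sin θ e₂`: the half-turn about it exchanges these
two vectors, and carries the adapted frame of a curve to that of its parallel curve. -/
def bisector (θ : ℝ) : R3 := ![0, Real.sin (θ / 2), Real.cos (θ / 2)]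

lemma bisector_dotProduct_self (θ : ℝ) : bisector θ ⬝ᵥ bisector θ = 1 := by
  rw [bisector, vec3_dotProduct']
  linear_combination Real.sin_sq_add_cos_sq (θ / 2)

lemma AdM_bisector_E1 (θ : ℝ) : AdM (toSu2 (bisector θ)) E1 = toSu2 (-Pi.single 0 1) := by
  rw [← toSu2_single_zero, AdM_toSu2 (bisector_dotProduct_self θ)]
  simp [bisector]

lemma AdM_bisector_E3 (θ : ℝ) :
    AdM (toSu2 (bisector θ)) E3 = toSu2 ![0, Real.sin θ, Real.cos θ] := by
  have hsin := Real.sin_two_mul (θ / 2)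
  have hcos := Real.cos_two_mul (θ / 2)
  rw [mul_div_cancel₀ θ two_ne_zero] at hsin hcos
  rw [← toSu2_single_two, AdM_toSu2 (bisector_dotProduct_self θ), hsin, hcos]
  congr 1
  ext i
  fin_cases i <;> simp [bisector] <;> ring

lemma IsLift.mul_bisector {γ δ : ℝ → R3} {c : ℝ → Mat2} {φ : ℝ → ℝ} {θ : ℝ} (hc : IsLift γ c)
    (h : IsRegularCurve γ) (hφ : ContDiff ℝ (⊤ : ℕ∞) φ)
    (hδ : ∀ s, δ s = parallelCurve γ θ (φ s))
    (hT : ∀ s, unitTangent δ s = -unitTangent γ (φ s)) :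
    IsLift δ fun s => c (φ s) * toSu2 (bisector θ) where
  mem s := mul_mem (hc.mem _) (toSu2_mem_specialUnitaryGroup (bisector_dotProduct_self θ))
  smooth i j := by
    simp only [Matrix.mul_apply]
    exact ContDiff.sum fun k _ => ((hc.smooth i k).comp hφ).mul contDiff_const
  ad3 s := by
    rw [AdM_mul, AdM_bisector_E3, hc.AdM_toSu2 h, hδ, parallelCurve, add_comm (Real.cos θ • _)]
    simp
  ad1 s := by
    rw [← unitTangent, AdM_mul, AdM_bisector_E1, hc.AdM_toSu2 h, hT]
    simp

lemma fmap_mul_right {b : Mat2} (hb : IsUnit b.det) (c1 c2 : ℝ → Mat2) (s1 s2 : ℝ) :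
    fmap (fun s => c1 s * b) (fun s => c2 s * b) s1 s2 = b⁻¹ * fmap c1 c2 s1 s2 * b := by
  simp only [fmap, Matrix.mul_inv_rev, Matrix.mul_assoc, Matrix.mul_nonsing_inv_cancel_left _ _ hb]

lemma fmap_mul_toSu2 {u : R3} (hu : u ⬝ᵥ u = 1) (c1 c2 : ℝ → Mat2) (s1 s2 : ℝ) :
    fmap (fun s => c1 s * toSu2 u) (fun s => c2 s * toSu2 u) s1 s2 =
      toSu2 u * fmap c1 c2 s1 s2 * (toSu2 u)⁻¹ := by
  have hdet : IsUnit (toSu2 u).det := by simp only [det_toSu2, hu, Complex.ofReal_one, isUnit_one]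
  rw [fmap_mul_right hdet, inv_toSu2 hu, neg_mul, neg_mul, mul_neg]

lemma fmap_comp_neg_right (c1 c2 : ℝ → Mat2) (s1 s2 : ℝ) :
    fmap c1 (fun s => c2 (-s)) s1 s2 = fmap c1 c2 s1 (-s2) := by
  rw [fmap, fmap, neg_zero]

/-! ### Parallel pairs -/

section ParallelPair

variable {γ γ1 γ2 : ℝ → R3} {θ s : ℝ}

lemma IsRegularCurve.cot_lt_kappa_parallelCurve (h : IsRegularCurve γ) (hθ : 0 < Real.sin θ)
    (hκ : Real.cot θ < kappa γ s) : Real.cot θ < kappa (parallelCurve γ θ) s := by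
  rw [h.kappa_parallelCurve_of_pos ((cot_lt_iff_cos_lt hθ).1 hκ)]
  exact cot_lt_parallelCurvature hθ hκ

lemma IsRegularCurve.kappa_parallelCurve_comp_neg_lt_cot (h : IsRegularCurve γ)
    (hθ : 0 < Real.sin θ) (hκ : kappa γ (-s) < Real.cot θ) :
    kappa (fun t => parallelCurve γ θ (-t)) s < Real.cot θ := by
  rw [h.kappa_parallelCurve_comp_neg ((lt_cot_iff_lt_cos hθ).1 hκ)]
  exact parallelCurvature_lt_cot hθ hκ

lemma isAdmissiblePair_parallelCurve (h : IsAdmissiblePair γ1 γ2) (hθ : 0 < Real.sin θ)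
    (h₁ : ∀ s, Real.cot θ < kappa γ1 s) (h₂ : ∀ s, kappa γ2 s < Real.cot θ) :
    IsAdmissiblePair (parallelCurve γ1 θ) fun s => parallelCurve γ2 θ (-s) := by
  have hne₁ s : kappa γ1 s * Real.sin θ ≠ Real.cos θ := ((cot_lt_iff_cos_lt hθ).1 (h₁ s)).ne'
  have hne₂ s : kappa γ2 s * Real.sin θ ≠ Real.cos θ := ((lt_cot_iff_lt_cos hθ).1 (h₂ s)).ne
  exact
    { reg1 := isRegularCurve_parallelCurve h.reg1 hne₁
      reg2 := (isRegularCurve_parallelCurve h.reg2 hne₂).comp_neg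
      param1 s := (h.reg1.speed_sq_mul_parallelCurve (hne₁ s)).trans (h.param1 s)
      param2 s := by
        rw [norm3_deriv_comp_neg, kappa_comp_neg, neg_sq,
          h.reg2.speed_sq_mul_parallelCurve (hne₂ (-s)), h.param2]
      curv s1 s2 := (h.reg2.kappa_parallelCurve_comp_neg_lt_cot hθ (h₂ (-s2))).trans
        (h.reg1.cot_lt_kappa_parallelCurve hθ (h₁ s1)) }

lemma isLift_parallelCurve {c : ℝ → Mat2} (hc : IsLift γ c) (h : IsRegularCurve γ)
    (hκ : ∀ s, Real.cos θ < kappa γ s * Real.sin θ) :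
    IsLift (parallelCurve γ θ) fun s => c s * toSu2 (bisector θ) :=
  hc.mul_bisector h contDiff_id (fun _ => rfl) fun s => unitTangent_parallelCurve_of_pos h (hκ s)

lemma isLift_parallelCurve_comp_neg {c : ℝ → Mat2} (hc : IsLift γ c) (h : IsRegularCurve γ)
    (hκ : ∀ s, kappa γ s * Real.sin θ < Real.cos θ) :
    IsLift (fun s => parallelCurve γ θ (-s)) fun s => c (-s) * toSu2 (bisector θ) :=
  hc.mul_bisector h contDiff_neg (fun _ => rfl) fun s => by
    rw [unitTangent_comp_neg, unitTangent_parallelCurve_of_neg h (hκ (-s))]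

end ParallelPair

theorem stmt17 (γ1 γ2 : ℝ → R3) (θ : ℝ) (c1 c2 : ℝ → Mat2)
    (h : IsAdmissiblePair γ1 γ2) (hc1 : IsLift γ1 c1) (hc2 : IsLift γ2 c2)
    (hθ : 0 < θ ∧ θ < Real.pi)
    (hcot : ∀ s1 s2 : ℝ, kappa γ2 s2 < Real.cot θ ∧ Real.cot θ < kappa γ1 s1) :
    IsAdmissiblePair (parallelCurve γ1 θ) (fun s => parallelCurve γ2 θ (-s)) ∧
    (∀ s1 s2 : ℝ, kappa (fun s => parallelCurve γ2 θ (-s)) s2 < Real.cot θ ∧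
      Real.cot θ < kappa (parallelCurve γ1 θ) s1) ∧
    (∃ d1 d2 : ℝ → Mat2,
      IsLift (parallelCurve γ1 θ) d1 ∧ IsLift (fun s => parallelCurve γ2 θ (-s)) d2 ∧
      ∃ a ∈ Matrix.specialUnitaryGroup (Fin 2) ℂ,
        ∀ s1 s2 : ℝ, fmap d1 d2 s1 s2 = a * fmap c1 c2 s1 (-s2) * a⁻¹) ∧
    ∀ s1 s2 : ℝ,
      (1 + kappa (parallelCurve γ1 θ) s1 * kappa (fun s => parallelCurve γ2 θ (-s)) s2) /
          (kappa (parallelCurve γ1 θ) s1 - kappa (fun s => parallelCurve γ2 θ (-s)) s2) =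
        -((1 + kappa γ1 s1 * kappa γ2 (-s2)) / (kappa γ1 s1 - kappa γ2 (-s2))) := by
  have hsin : 0 < Real.sin θ := Real.sin_pos_of_pos_of_lt_pi hθ.1 hθ.2
  have lt_kappa s : Real.cot θ < kappa γ1 s := (hcot s s).2
  have kappa_lt s : kappa γ2 s < Real.cot θ := (hcot s s).1
  have cos_lt s : Real.cos θ < kappa γ1 s * Real.sin θ := (cot_lt_iff_cos_lt hsin).1 (lt_kappa s)
  have lt_cos s : kappa γ2 s * Real.sin θ < Real.cos θ := (lt_cot_iff_lt_cos hsin).1 (kappa_lt s)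
  have hu := bisector_dotProduct_self θ
  refine ⟨isAdmissiblePair_parallelCurve h hsin lt_kappa kappa_lt, fun s1 s2 => ⟨?_, ?_⟩,
    ⟨_, _, isLift_parallelCurve hc1 h.reg1 cos_lt,
      isLift_parallelCurve_comp_neg hc2 h.reg2 lt_cos,
      toSu2 (bisector θ), toSu2_mem_specialUnitaryGroup hu, fun s1 s2 => ?_⟩, fun s1 s2 => ?_⟩
  · exact h.reg2.kappa_parallelCurve_comp_neg_lt_cot hsin (kappa_lt (-s2))
  · exact h.reg1.cot_lt_kappa_parallelCurve hsin (lt_kappa s1)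
  · rw [fmap_mul_toSu2 hu c1 fun s => c2 (-s), fmap_comp_neg_right]
  · rw [h.reg1.kappa_parallelCurve_of_pos (cos_lt s1),
      h.reg2.kappa_parallelCurve_comp_neg (lt_cos (-s2))]
    exact meanCurvature_parallelCurvature (sub_pos.2 (cos_lt s1)).ne'
      (sub_neg.2 (lt_cos (-s2))).ne
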